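/- arXiv:1809.02947 — 5 statements merged into one kernel-verified Lean document; each statement's English description precedes it below -/
import Mathlib

section
/- Let a, b be integers with gcd(a,b) = 1 and let n ≥ 1. Let A_n be the n×n integer matrix with a on the diagonal, b on the subdiagonal, and 0 elsewhere. Then the Smith normal form of A_n is the diagonal matrix diag(1, 1, …, 1, aⁿ); that is, there exist matrices P, Q ∈ GL(n,ℤ) such that P·A_n·Q = diag(1, 1, …, 1, aⁿ). -/
/-- The block diagonal matrix `diag(1, X)`. -/
def oneBlock {m : ℕ} (X : Matrix (Fin m) (Fin m) ℤ) : Matrix (Fin (m + 1)) (Fin (m + 1)) ℤ :=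
  Matrix.of (Fin.cons (Fin.cons 1 0) fun i => Fin.cons 0 (X i))

theorem oneBlock_mul {m : ℕ} (X Y : Matrix (Fin m) (Fin m) ℤ) :
    oneBlock X * oneBlock Y = oneBlock (X * Y) := by
  ext i j
  refine Fin.cases ?_ (fun i => ?_) i <;> refine Fin.cases ?_ (fun j => ?_) j <;>
    simp [oneBlock, Matrix.mul_apply, Fin.sum_univ_succ]

theorem oneBlock_one {m : ℕ} : oneBlock (1 : Matrix (Fin m) (Fin m) ℤ) = 1 := by
  ext i j
  refine Fin.cases ?_ (fun i => ?_) i <;> refine Fin.cases ?_ (fun j => ?_) j <;>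
    simp [oneBlock, Matrix.one_apply, Fin.succ_ne_zero, (Fin.succ_ne_zero _).symm]

/-- `X ↦ diag(1, X)` as a monoid homomorphism. -/
def oneBlockHom (m : ℕ) :
    Matrix (Fin m) (Fin m) ℤ →* Matrix (Fin (m + 1)) (Fin (m + 1)) ℤ where
  toFun := oneBlock
  map_one' := oneBlock_one
  map_mul' X Y := (oneBlock_mul X Y).symm

/-- The block diagonal matrix with upper left block `!![p, q; r, s]` and an identity block. -/
def topBlock (m : ℕ) (p q r s : ℤ) : Matrix (Fin (m + 2)) (Fin (m + 2)) ℤ :=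
  Matrix.of (Fin.cons (Fin.cons p (Fin.cons q 0)) (Fin.cons (Fin.cons r (Fin.cons s 0))
    fun i => Fin.cons 0 (Fin.cons 0 ((1 : Matrix (Fin m) (Fin m) ℤ) i))))

theorem topBlock_eq_one (m : ℕ) : topBlock m 1 0 0 1 = 1 := by
  ext i j
  refine Fin.cases ?_ (Fin.cases ?_ fun i => ?_) i <;>
    refine Fin.cases ?_ (Fin.cases ?_ fun j => ?_) j <;>
    simp [topBlock, Matrix.one_apply, Fin.ext_iff]

theorem topBlock_mul (m : ℕ) (p q r s p' q' r' s' : ℤ) :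
    topBlock m p q r s * topBlock m p' q' r' s' =
      topBlock m (p * p' + q * r') (p * q' + q * s') (r * p' + s * r') (r * q' + s * s') := by
  ext i j
  refine Fin.cases ?_ (Fin.cases ?_ fun i => ?_) i <;>
    refine Fin.cases ?_ (Fin.cases ?_ fun j => ?_) j <;>
    simp [topBlock, Matrix.mul_apply, Fin.sum_univ_succ, Matrix.one_apply]

/-- `topBlock` as a unit, when its upper left block has determinant one. -/
def topBlockUnit (m : ℕ) (p q r s : ℤ) (h : p * s - q * r = 1) :
    (Matrix (Fin (m + 2)) (Fin (m + 2)) ℤ)ˣ where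
  val := topBlock m p q r s
  inv := topBlock m s (-q) (-r) p
  val_inv := by
    rw [topBlock_mul, ← topBlock_eq_one]
    congr 1 <;> linarith
  inv_val := by
    rw [topBlock_mul, ← topBlock_eq_one]
    congr 1 <;> linarith

/-- The lower bidiagonal matrix with diagonal `c, a, …, a` and subdiagonal `b, …, b`. -/
def bidiag (a b c : ℤ) (m : ℕ) : Matrix (Fin m) (Fin m) ℤ :=
  Matrix.of fun i j => if (i : ℕ) = j then (if (i : ℕ) = 0 then c else a)
    else if (i : ℕ) = (j : ℕ) + 1 then b else 0

theorem topBlock_mul_apply_succ_succ (m : ℕ) (p q r s : ℤ)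
    (X : Matrix (Fin (m + 2)) (Fin (m + 2)) ℤ) (i : Fin m) (j : Fin (m + 2)) :
    (topBlock m p q r s * X) i.succ.succ j = X i.succ.succ j := by
  simp [topBlock, Matrix.mul_apply, Fin.sum_univ_succ, Matrix.one_apply]

theorem topBlock_mul_bidiag_mul_topBlock (a b c u v : ℤ) (h : u * c + v * b = 1) (m : ℕ) :
    topBlock m u v (-b) c * bidiag a b c (m + 2) * topBlock m 1 (-(v * a)) 0 1 =
      oneBlock (bidiag a b (c * a) (m + 1)) := by
  ext i j
  refine Fin.cases ?_ (Fin.cases ?_ fun i => ?_) i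
  case refine_3 =>
    rw [Matrix.mul_assoc, topBlock_mul_apply_succ_succ]
    refine Fin.cases ?_ (Fin.cases ?_ fun j => ?_) j <;>
      simp [topBlock, oneBlock, bidiag, Matrix.mul_apply, Fin.sum_univ_succ, Matrix.one_apply]
    rw [Finset.sum_eq_single j] <;> simp +contextual
  all_goals
    refine Fin.cases ?_ (Fin.cases ?_ fun j => ?_) j <;>
      simp [topBlock, oneBlock, bidiag, Matrix.mul_apply, Fin.sum_univ_succ]
  · exact h
  · linear_combination -(v * a) * h
  · ring
  · exact Or.inl (by ring)

theorem exists_units_mul_bidiag_mul (a b : ℤ) (h : IsCoprime a b) (m k : ℕ) :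
    ∃ P Q : (Matrix (Fin (m + 1)) (Fin (m + 1)) ℤ)ˣ,
      (P : Matrix (Fin (m + 1)) (Fin (m + 1)) ℤ) * bidiag a b (a ^ k) (m + 1) * Q =
        Matrix.diagonal fun i : Fin (m + 1) => if (i : ℕ) = m then a ^ (k + m) else 1 := by
  induction m generalizing k with
  | zero =>
    refine ⟨1, 1, ?_⟩
    ext i j
    simp [bidiag, Matrix.diagonal_apply, Fin.ext_iff]
  | succ m ih =>
    obtain ⟨u, v, huv⟩ : IsCoprime (a ^ k) b := h.pow_left
    obtain ⟨P, Q, hPQ⟩ := ih (k + 1)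
    refine ⟨Units.map (oneBlockHom _) P * topBlockUnit m u v (-b) (a ^ k) (by linarith),
      topBlockUnit m 1 (-(v * a)) 0 1 (by ring) * Units.map (oneBlockHom _) Q, ?_⟩
    calc
      _ = oneBlock P.val * (topBlock m u v (-b) (a ^ k) * bidiag a b (a ^ k) (m + 2) *
            topBlock m 1 (-(v * a)) 0 1) * oneBlock Q.val := by
          simp [Matrix.mul_assoc, topBlockUnit, oneBlockHom]
      _ = _ := by
          rw [topBlock_mul_bidiag_mul_topBlock _ _ _ _ _ huv, oneBlock_mul, oneBlock_mul,
            ← pow_succ, hPQ]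
          ext i j
          refine Fin.cases ?_ (fun i => ?_) i <;> refine Fin.cases ?_ (fun j => ?_) j <;>
            simp [oneBlock, Matrix.diagonal_apply, Fin.succ_ne_zero, (Fin.succ_ne_zero _).symm,
              add_assoc, add_comm 1 m]

/-- Smith normal form of the `n × n` matrix with `a` on the diagonal and `b` on the
subdiagonal, for coprime `a, b`: there are `P, Q ∈ GL(n,ℤ)` with
`P * Aₙ * Q = diag(1, …, 1, aⁿ)`. -/
theorem stmt8 (a b : ℤ) (h : Int.gcd a b = 1) (n : ℕ) (hn : 1 ≤ n) :
    ∃ P Q : (Matrix (Fin n) (Fin n) ℤ)ˣ,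
      (P : Matrix (Fin n) (Fin n) ℤ) *
          (Matrix.of fun i j : Fin n =>
            if i = j then a else if (i : ℕ) = (j : ℕ) + 1 then b else 0) *
          (Q : Matrix (Fin n) (Fin n) ℤ) =
        Matrix.diagonal (fun i : Fin n => if (i : ℕ) + 1 = n then a ^ n else 1) := by
  obtain ⟨m, rfl⟩ : ∃ m, n = m + 1 := ⟨n - 1, by omega⟩
  obtain ⟨P, Q, hPQ⟩ :=
    exists_units_mul_bidiag_mul a b (Int.isCoprime_iff_gcd_eq_one.mpr h) m 1
  refine ⟨P, Q, ?_⟩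
  convert hPQ using 4
  · simp only [bidiag, Fin.ext_iff, pow_one, ite_self]
  · simp
  · rw [add_comm]
end

section
/- Let m, n be integers with gcd(m,n) = 1 and m ≠ n, and let c ≥ 1. Then A_c(m,n) is a cyclic group of order |m−n|^c, i.e. A_c(m,n) ≅ ℤ/|m−n|^c ℤ. -/
noncomputable section

def shiftN (c : ℕ) : Matrix (Fin c) (Fin c) ℤ :=
  Matrix.of fun i j => if (i : ℕ) = (j : ℕ) + 1 then 1 else 0

def Mphi (c : ℕ) (m n : ℤ) : Matrix (Fin c) (Fin c) ℤ := (n - m) • 1 + (-m) • shiftN c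

def Mpsi (c : ℕ) : Matrix (Fin c) (Fin c) ℤ := 1 + shiftN c

lemma commute_Mpsi_Mphi (c : ℕ) (m n : ℤ) : Commute (Mpsi c) (Mphi c m n) := by
  unfold Mpsi Mphi
  simp only [mul_add, add_mul, Commute, SemiconjBy]
  simp only [mul_smul_comm, smul_mul_assoc, one_mul, mul_one]
  abel

lemma det_Mpsi (c : ℕ) : (Mpsi c).det = 1 := by
  have h : (Mpsi c).BlockTriangular (OrderDual.toDual) := by
    intro i j hij
    simp only [Mpsi, shiftN, Matrix.add_apply, Matrix.one_apply, Matrix.of_apply]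
    have : i < j := hij
    rw [if_neg (by omega), if_neg (by omega)]
    simp
  rw [Matrix.det_of_lowerTriangular _ h]
  apply Finset.prod_eq_one
  intro i _
  simp [Mpsi, shiftN, Matrix.one_apply]

def MpsiUnit (c : ℕ) : (Matrix (Fin c) (Fin c) ℤ)ˣ :=
  ((Matrix.isUnit_iff_isUnit_det _).2 (by rw [det_Mpsi]; exact isUnit_one)).unit

lemma MpsiUnit_coe (c : ℕ) : (MpsiUnit c : Matrix (Fin c) (Fin c) ℤ) = Mpsi c :=
  IsUnit.unit_spec _

/-- ψ as an additive automorphism of ℤ^c. -/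
def psiEquiv (c : ℕ) : (Fin c → ℤ) ≃+ (Fin c → ℤ) where
  toFun := (Mpsi c).mulVec
  invFun := ((MpsiUnit c)⁻¹ : (Matrix (Fin c) (Fin c) ℤ)ˣ).val.mulVec
  left_inv := fun v => by
    rw [Matrix.mulVec_mulVec]
    rw [show ((MpsiUnit c)⁻¹ : (Matrix (Fin c) (Fin c) ℤ)ˣ).val * Mpsi c = 1 by
      rw [← MpsiUnit_coe]; exact Units.inv_mul _]
    exact Matrix.one_mulVec v
  right_inv := fun v => by
    rw [Matrix.mulVec_mulVec]
    rw [show Mpsi c * ((MpsiUnit c)⁻¹ : (Matrix (Fin c) (Fin c) ℤ)ˣ).val = 1 by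
      rw [← MpsiUnit_coe]; exact Units.mul_inv _]
    exact Matrix.one_mulVec v
  map_add' := fun x y => Matrix.mulVec_add _ x y

/-- The range of φ, as an additive subgroup of ℤ^c. -/
def phiRange (c : ℕ) (m n : ℤ) : AddSubgroup (Fin c → ℤ) :=
  (LinearMap.range (Mphi c m n).mulVecLin).toAddSubgroup

/-- The abelian group A_c(m,n) = ℤ^c / Im φ. -/
abbrev Ac (c : ℕ) (m n : ℤ) : Type := (Fin c → ℤ) ⧸ phiRange c m n

lemma map_phiRange (c : ℕ) (m n : ℤ) :
    (phiRange c m n).map (psiEquiv c : (Fin c → ℤ) →+ (Fin c → ℤ)) = phiRange c m n := by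
  have hcomm := commute_Mpsi_Mphi c m n
  ext x
  constructor
  · rintro ⟨y, ⟨z, rfl⟩, rfl⟩
    refine ⟨(Mpsi c).mulVec z, ?_⟩
    show (Mphi c m n).mulVec ((Mpsi c).mulVec z) = _
    show _ = (Mpsi c).mulVec ((Mphi c m n).mulVec z)
    rw [Matrix.mulVec_mulVec, Matrix.mulVec_mulVec, hcomm.eq]
  · rintro ⟨z, rfl⟩
    have hinv : Commute (((MpsiUnit c)⁻¹ : (Matrix (Fin c) (Fin c) ℤ)ˣ) : Matrix (Fin c) (Fin c) ℤ)
        (Mphi c m n) := by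
      have : Commute ((MpsiUnit c : Matrix (Fin c) (Fin c) ℤ)) (Mphi c m n) := by
        rw [MpsiUnit_coe]; exact hcomm
      exact this.units_inv_left
    refine ⟨(Mphi c m n).mulVec (((MpsiUnit c)⁻¹ :
      (Matrix (Fin c) (Fin c) ℤ)ˣ).val.mulVec z), ⟨_, rfl⟩, ?_⟩
    show (Mpsi c).mulVec _ = (Mphi c m n).mulVec z
    rw [Matrix.mulVec_mulVec, Matrix.mulVec_mulVec, hcomm.eq, mul_assoc,
      show Mpsi c * ((MpsiUnit c)⁻¹ : (Matrix (Fin c) (Fin c) ℤ)ˣ).val = 1 by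
        rw [← MpsiUnit_coe]; exact Units.mul_inv _, mul_one]


/-- The automorphism ψ induced on A_c(m,n). -/
def psiA (c : ℕ) (m n : ℤ) : Ac c m n ≃+ Ac c m n :=
  QuotientAddGroup.congr (phiRange c m n) (phiRange c m n) (psiEquiv c) (map_phiRange c m n)

/-- The action of ⟨t⟩ ≅ ℤ on A_c(m,n), with t⁻¹ a t = ψ(a). -/
def GcAct (c : ℕ) (m n : ℤ) : Multiplicative ℤ →* MulAut (Multiplicative (Ac c m n)) :=
  zpowersHom _ (AddEquiv.toMultiplicative (psiA c m n))⁻¹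

/-- The group G_c(m,n) = A_c(m,n) ⋊ ⟨t⟩. -/
abbrev Gc (c : ℕ) (m n : ℤ) : Type :=
  SemidirectProduct (Multiplicative (Ac c m n)) (Multiplicative ℤ) (GcAct c m n)

/-- The element t of G_c(m,n). -/
def tGen (c : ℕ) (m n : ℤ) : Gc c m n := SemidirectProduct.inr (Multiplicative.ofAdd 1)

/-- The image ē_i of the i-th standard basis vector in A_c(m,n). -/
def eA (c : ℕ) (m n : ℤ) (i : Fin c) : Ac c m n :=
  QuotientAddGroup.mk (Pi.single i 1)

/-- The element ē_i viewed in G_c(m,n). -/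
def eG (c : ℕ) (m n : ℤ) (i : Fin c) : Gc c m n :=
  SemidirectProduct.inl (Multiplicative.ofAdd (eA c m n i))

end

/-- The cokernel of a nonsingular integer matrix has order the absolute value of its determinant. -/
lemma Matrix.card_quotient_range_mulVecLin {ι : Type*} [Fintype ι] [DecidableEq ι]
    (A : Matrix ι ι ℤ) (hA : A.det ≠ 0) :
    Nat.card ((ι → ℤ) ⧸ LinearMap.range A.mulVecLin) = A.det.natAbs := by
  let e := LinearEquiv.ofInjective A.mulVecLin (Matrix.mulVec_injective_of_det_ne_zero hA)
  rw [← Submodule.natAbs_det_equiv _ e, ← LinearMap.det_toLin']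
  rfl

lemma det_Mphi (c : ℕ) (m n : ℤ) : (Mphi c m n).det = (n - m) ^ c := by
  have h : (Mphi c m n).BlockTriangular OrderDual.toDual := by
    intro i j hij
    have : i < j := hij
    have hne : i ≠ j := this.ne
    have hsub : (i : ℕ) ≠ j + 1 := by omega
    simp only [Mphi, shiftN, Matrix.add_apply, Matrix.smul_apply, Matrix.one_apply_ne hne,
      Matrix.of_apply, if_neg hsub, smul_zero, add_zero]
  have hdiag (i : Fin c) : Mphi c m n i i = n - m := by
    simp only [Mphi, shiftN, Matrix.add_apply, Matrix.smul_apply, Matrix.one_apply_eq,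
      Matrix.of_apply, if_neg (Nat.succ_ne_self i).symm, mul_zero, add_zero, smul_eq_mul, mul_one]
  rw [Matrix.det_of_isLowerTriangular _ h]
  simp [hdiag]

/-- A functional on `ℤ^c` which induces the isomorphism of `A_c(m,n)` with `ℤ/|m-n|^c`. -/
def cokerWeight (c : ℕ) (m n : ℤ) (i : Fin c) : ℤ := m ^ (c - 1 - (i : ℕ)) * (n - m) ^ (i : ℕ)

lemma pow_dvd_cokerWeight_vecMul_Mphi (c : ℕ) (m n : ℤ) (j : Fin c) :
    (n - m) ^ c ∣ Matrix.vecMul (cokerWeight c m n) (Mphi c m n) j := by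
  have hexp : Matrix.vecMul (cokerWeight c m n) (Mphi c m n) j =
      (n - m) * cokerWeight c m n j -
        m * ∑ i : Fin c, if (i : ℕ) = j + 1 then cokerWeight c m n i else 0 := by
    simp only [Mphi, Matrix.vecMul_add, Matrix.vecMul_smul, Matrix.vecMul_one, Pi.add_apply,
      Pi.smul_apply, smul_eq_mul]
    simp [Matrix.vecMul, dotProduct, shiftN, sub_eq_add_neg]
  rw [hexp]
  by_cases hj : (j : ℕ) + 1 < c
  · have hsum : (∑ i : Fin c, if (i : ℕ) = j + 1 then cokerWeight c m n i else 0) =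
        cokerWeight c m n ⟨j + 1, hj⟩ := by
      rw [Finset.sum_eq_single ⟨j + 1, hj⟩] <;> simp [Fin.ext_iff]
      intro b hb hb'
      exact absurd hb' hb
    have hexponent : c - 1 - (j : ℕ) = c - 1 - (j + 1) + 1 := by omega
    rw [hsum, cokerWeight, cokerWeight, hexponent]
    ring_nf
    simp
  · have hlast : c = j + 1 := by omega
    have hsum : (∑ i : Fin c, if (i : ℕ) = j + 1 then cokerWeight c m n i else 0) = 0 :=
      Finset.sum_eq_zero fun i _ => if_neg (by omega)
    have hpow : (n - m) ^ c = (n - m) * (n - m) ^ (j : ℕ) := by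
      rw [← pow_succ', ← hlast]
    rw [hsum, cokerWeight, hpow]
    exact ⟨m ^ (c - 1 - (j : ℕ)), by ring⟩

/-- The homomorphism `ℤ^c → ℤ/|m-n|^c` with weights `cokerWeight`. -/
def cokerHom (c : ℕ) (m n : ℤ) : (Fin c → ℤ) →+ ZMod ((m - n).natAbs ^ c) where
  toFun v := ((cokerWeight c m n ⬝ᵥ v : ℤ) : ZMod ((m - n).natAbs ^ c))
  map_zero' := by simp
  map_add' v w := by simp [dotProduct_add]

lemma phiRange_le_ker_cokerHom (c : ℕ) (m n : ℤ) :
    phiRange c m n ≤ (cokerHom c m n).ker := by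
  rintro _ ⟨v, rfl⟩
  change ((cokerWeight c m n ⬝ᵥ (Mphi c m n).mulVec v : ℤ) : ZMod ((m - n).natAbs ^ c)) = 0
  rw [Matrix.dotProduct_mulVec, ZMod.intCast_zmod_eq_zero_iff_dvd, Nat.cast_pow]
  refine Finset.dvd_sum fun j _ => Dvd.dvd.mul_right ?_ _
  refine dvd_trans (pow_dvd_pow_of_dvd ?_ c) (pow_dvd_cokerWeight_vecMul_Mphi c m n j)
  rw [Int.natAbs_dvd, ← neg_sub n m, neg_dvd]

lemma cokerHom_surjective (c : ℕ) (m n : ℤ) (h : Int.gcd m n = 1) (hc : 1 ≤ c) :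
    Function.Surjective (cokerHom c m n) := by
  have hcop : IsCoprime (((m - n).natAbs ^ c : ℕ) : ℤ) (m ^ (c - 1)) := by
    rw [Nat.cast_pow]
    refine IsCoprime.pow ?_
    have hmn : IsCoprime (m - n) m := by
      obtain ⟨a, b, hab⟩ := Int.isCoprime_iff_gcd_eq_one.2 h
      exact ⟨-b, a + b, by linear_combination hab⟩
    rw [Int.natCast_natAbs]
    exact hmn.abs_left
  obtain ⟨u, hu⟩ := (ZMod.coe_int_isUnit_iff_isCoprime _ _).2 hcop
  intro y
  obtain ⟨k, hk⟩ := ZMod.intCast_surjective ((↑u⁻¹ : ZMod ((m - n).natAbs ^ c)) * y)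
  refine ⟨Pi.single ⟨0, hc⟩ k, ?_⟩
  change ((cokerWeight c m n ⬝ᵥ Pi.single ⟨0, hc⟩ k : ℤ) : ZMod ((m - n).natAbs ^ c)) = y
  rw [dotProduct_single, Int.cast_mul, hk]
  simp only [cokerWeight, Nat.sub_zero, pow_zero, mul_one]
  rw [← hu, Units.mul_inv_cancel_left]

lemma card_Ac (c : ℕ) (m n : ℤ) (hmn : m ≠ n) : Nat.card (Ac c m n) = (m - n).natAbs ^ c := by
  have hdet : (Mphi c m n).det ≠ 0 := by
    rw [det_Mphi]
    exact pow_ne_zero _ (sub_ne_zero.2 hmn.symm)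
  have := Matrix.card_quotient_range_mulVecLin (Mphi c m n) hdet
  rw [det_Mphi, Int.natAbs_pow, ← Int.natAbs_neg, neg_sub] at this
  exact this

/-- For `gcd(m,n) = 1`, `m ≠ n` and `c ≥ 1`, `A_c(m,n)` is cyclic of order `|m-n|^c`. -/
theorem stmt9 (m n : ℤ) (h : Int.gcd m n = 1) (hmn : m ≠ n) (c : ℕ) (hc : 1 ≤ c) :
    Nonempty (Ac c m n ≃+ ZMod ((m - n).natAbs ^ c)) := by
  have hpos : 0 < (m - n).natAbs ^ c :=
    pow_pos (Int.natAbs_pos.2 (sub_ne_zero.2 hmn)) c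
  have hcard := card_Ac c m n hmn
  have : Finite (Ac c m n) := Nat.finite_of_card_ne_zero (by omega)
  let f := QuotientAddGroup.lift (phiRange c m n) (cokerHom c m n) (phiRange_le_ker_cokerHom c m n)
  have hf : Function.Surjective f :=
    QuotientAddGroup.lift_surjective_of_surjective _ _ (cokerHom_surjective c m n h hc) _
  have hbij : Function.Bijective f :=
    hf.bijective_of_nat_card_le (by rw [hcard, Nat.card_zmod])
  exact ⟨AddEquiv.ofBijective f hbij⟩
end

section
/- Let m, n be integers with gcd(m,n) = 1 and m ≠ n, and let c ≥ 1. Set s = ē₁ ∈ A_c(m,n). Then s generates the cyclic group A_c(m,n) (of order |n−m|^c), and there exists an integer ν with ψ(s) = s^ν (equivalently t⁻¹ s t = s^ν in G_c(m,n)) such that gcd(ν, n−m) = 1 and ν·m ≡ n (mod |n−m|^c). -/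
/-- A nonsingular integer matrix has a cokernel of order `|det M|`. -/
lemma Matrix.card_quotient_range_mulVecLin_s10 {ι : Type*} [Fintype ι] [DecidableEq ι]
    (M : Matrix ι ι ℤ) (hM : M.det ≠ 0) :
    Nat.card ((ι → ℤ) ⧸ LinearMap.range M.mulVecLin) = M.det.natAbs := by
  have hinj : Function.Injective M.mulVecLin :=
    Matrix.mulVec_injective_of_det_ne_zero hM
  rw [← Submodule.natAbs_det_equiv _ (LinearEquiv.ofInjective M.mulVecLin hinj),
    ← LinearMap.det_toLin' M]
  rfl

/-- The shift matrix sends each basis vector to the next one. -/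
lemma shiftN_mulVec_single {c : ℕ} (i j : Fin c) (hij : (i : ℕ) = j + 1) :
    (shiftN c).mulVec (Pi.single j 1) = Pi.single i 1 := by
  ext k
  simp [shiftN, Pi.single_apply, Fin.ext_iff, hij]

/-- If `p` inverts `m` modulo `(n - m) ^ c`, then the shift acts on `A_c(m,n)` as multiplication
by `p * (n - m)`. -/
lemma mk_shiftN_mulVec {c : ℕ} {m n p q : ℤ} (hpq : p * m + q * (n - m) ^ c = 1)
    (v : Fin c → ℤ) :
    (((shiftN c).mulVec v : Fin c → ℤ) : Ac c m n) = (p * (n - m)) • (v : Ac c m n) := by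
  rw [← QuotientAddGroup.mk_zsmul, QuotientAddGroup.eq]
  have hadj := congrArg (fun M : Matrix (Fin c) (Fin c) ℤ => M.mulVec ((shiftN c).mulVec v))
    (Matrix.mul_adjugate (Mphi c m n))
  simp only [← Matrix.mulVec_mulVec, det_Mphi, Matrix.smul_mulVec, Matrix.one_mulVec] at hadj
  refine ⟨p • v - q • (Mphi c m n).adjugate.mulVec ((shiftN c).mulVec v), ?_⟩
  rw [Matrix.mulVecLin_apply, Matrix.mulVec_sub, Matrix.mulVec_smul, Matrix.mulVec_smul, hadj]
  ext i
  simp only [Mphi, Matrix.add_mulVec, Matrix.smul_mulVec, Matrix.one_mulVec, Pi.add_apply,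
    Pi.sub_apply, Pi.neg_apply, Pi.smul_apply, smul_eq_mul]
  linear_combination (-(shiftN c).mulVec v i) * hpq

lemma psiA_mk {c : ℕ} {m n : ℤ} (v : Fin c → ℤ) :
    psiA c m n (v : Ac c m n) = (v : Ac c m n) + (((shiftN c).mulVec v : Fin c → ℤ) : Ac c m n) := by
  change (((Mpsi c).mulVec v : Fin c → ℤ) : Ac c m n) = _
  rw [Mpsi, Matrix.add_mulVec, Matrix.one_mulVec, QuotientAddGroup.mk_add]

lemma zmultiples_eA_zero_eq_top {c : ℕ} (hc : 1 ≤ c) {m n p q : ℤ}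
    (hpq : p * m + q * (n - m) ^ c = 1) :
    AddSubgroup.zmultiples (eA c m n ⟨0, hc⟩) = ⊤ := by
  have hbasis : ∀ (k : ℕ) (hk : k < c),
      eA c m n ⟨k, hk⟩ ∈ AddSubgroup.zmultiples (eA c m n ⟨0, hc⟩) := by
    intro k
    induction k with
    | zero => exact fun _ => AddSubgroup.mem_zmultiples _
    | succ k ih =>
      intro hk
      rw [eA.eq_1 c m n ⟨k + 1, hk⟩, ← shiftN_mulVec_single ⟨k + 1, hk⟩ ⟨k, by omega⟩ rfl,
        mk_shiftN_mulVec hpq]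
      exact AddSubgroup.zsmul_mem _ (ih (by omega)) _
  rw [eq_top_iff]
  rintro a -
  obtain ⟨v, rfl⟩ := QuotientAddGroup.mk_surjective a
  have hv : (v : Ac c m n) = ∑ i, v i • eA c m n i := by
    conv_lhs => rw [pi_eq_sum_univ' v]
    simp only [eA, ← QuotientAddGroup.mk_zsmul]
    rw [← QuotientAddGroup.mk_sum]
  rw [hv]
  exact AddSubgroup.sum_mem _ fun i _ => AddSubgroup.zsmul_mem _ (hbasis i i.2) _

/-- For `gcd(m,n) = 1`, `m ≠ n` and `c ≥ 1`, with `s = ē₁`: `s` generates the cyclic group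
`A_c(m,n)` of order `|n-m|^c`, and there is `ν` with `ψ(s) = ν • s` (equivalently
`t⁻¹ s t = s^ν` in `G_c(m,n)`), `gcd(ν, n-m) = 1` and `ν·m ≡ n (mod |n-m|^c)`. -/
theorem stmt10 (m n : ℤ) (h : Int.gcd m n = 1) (hmn : m ≠ n) (c : ℕ) (hc : 1 ≤ c) :
    AddSubgroup.zmultiples (eA c m n ⟨0, hc⟩) = ⊤ ∧
    Nat.card (Ac c m n) = (n - m).natAbs ^ c ∧
    ∃ ν : ℤ, psiA c m n (eA c m n ⟨0, hc⟩) = ν • eA c m n ⟨0, hc⟩ ∧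
      Int.gcd ν (n - m) = 1 ∧
      ν * m ≡ n [ZMOD (((n - m).natAbs : ℤ) ^ c)] := by
  have hk : n - m ≠ 0 := sub_ne_zero.mpr hmn.symm
  have hcop : IsCoprime m (n - m) := by
    have := (Int.isCoprime_iff_gcd_eq_one.mpr h).add_mul_left_right (-1)
    rwa [mul_neg_one, ← sub_eq_add_neg] at this
  obtain ⟨p, q, hpq⟩ := hcop.pow_right (n := c)
  refine ⟨zmultiples_eA_zero_eq_top hc hpq, ?_, 1 + p * (n - m), ?_, ?_, ?_⟩
  · have hcard := Matrix.card_quotient_range_mulVecLin_s10 (Mphi c m n)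
      (by rw [det_Mphi]; exact pow_ne_zero c hk)
    rwa [det_Mphi, Int.natAbs_pow] at hcard
  · rw [eA, psiA_mk, mk_shiftN_mulVec hpq, add_zsmul, one_zsmul]
  · rw [← Int.isCoprime_iff_gcd_eq_one]
    exact isCoprime_one_left.add_mul_right_left p
  · rw [Int.modEq_iff_dvd, Int.natCast_natAbs, ← abs_pow, abs_dvd]
    exact ⟨q * (n - m), by linear_combination (-(n - m)) * hpq⟩
end

section
/- Let m, n be integers with gcd(m,n) = 1 and m ≠ n, and let c ≥ 1. Let φ be an automorphism of G_c(m,n). Since A_c(m,n) is the torsion subgroup of G_c(m,n) and hence characteristic, φ induces an automorphism φ̄ of the infinite cyclic quotient G_c(m,n)/A_c(m,n) = ⟨t⟩. Then the Reidemeister number R(φ) is finite if and only if φ̄(t) = t⁻¹. -/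
/-- The twisted conjugacy (Reidemeister) equivalence relation of an endomorphism `φ`:
`x ∼ y ↔ ∃ z, x = z * y * (φ z)⁻¹`. -/
def twistedConj {G : Type*} [Group G] (φ : G →* G) : Setoid G where
  r x y := ∃ z : G, x = z * y * (φ z)⁻¹
  iseqv := by
    constructor
    · exact fun x => ⟨1, by simp⟩
    · rintro x y ⟨z, rfl⟩
      exact ⟨z⁻¹, by simp [mul_assoc]⟩
    · rintro x y z ⟨u, rfl⟩ ⟨v, rfl⟩
      exact ⟨u * v, by simp [mul_assoc]⟩

/-- A group `G` has the `R∞`–property if every automorphism has infinitely many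
twisted conjugacy classes. -/
def HasRInfty (G : Type*) [Group G] : Prop :=
  ∀ φ : G ≃* G, Infinite (Quotient (twistedConj φ.toMonoidHom))

lemma finite_Ac (c : ℕ) {m n : ℤ} (hmn : m ≠ n) : Finite (Ac c m n) := by
  refine AddCommGroup.finite_of_fg_isAddTorsion _ fun a => ?_
  obtain ⟨v, rfl⟩ := QuotientAddGroup.mk_surjective a
  have hdet : (Mphi c m n).det ≠ 0 := by
    rw [det_Mphi]
    exact pow_ne_zero _ (sub_ne_zero.2 hmn.symm)
  rw [isOfFinAddOrder_iff_zsmul_eq_zero]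
  refine ⟨(Mphi c m n).det, hdet, ?_⟩
  rw [← QuotientAddGroup.mk_zsmul, QuotientAddGroup.eq_zero_iff]
  refine ⟨(Mphi c m n).adjugate.mulVec v, ?_⟩
  rw [Matrix.mulVecLin_apply, Matrix.mulVec_mulVec, Matrix.mul_adjugate, Matrix.smul_mulVec,
    Matrix.one_mulVec]

namespace SemidirectProduct

variable {N : Type*} [Group N] {α : Multiplicative ℤ →* MulAut N}

/-- A homomorphism from `N ⋊ ℤ` to `ℤ`, with `N` finite, is determined by its value at the
generator of `ℤ`. -/
lemma toAdd_hom_apply [Finite N] (f : N ⋊[α] Multiplicative ℤ →* Multiplicative ℤ)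
    (z : N ⋊[α] Multiplicative ℤ) :
    (f z).toAdd = z.right.toAdd * (f (inr (Multiplicative.ofAdd 1))).toAdd := by
  have hl : f (inl z.left) = 1 :=
    (isOfFinOrder_iff_eq_one _).1
      ((f.comp inl).isOfFinOrder (isOfFinOrder_of_finite z.left))
  have hr : (inr z.right : N ⋊[α] Multiplicative ℤ) =
      inr (Multiplicative.ofAdd 1) ^ z.right.toAdd := by
    rw [← map_zpow, ← ofAdd_zsmul]
    simp
  conv_lhs => rw [← inl_left_mul_inr_right z, map_mul, hl, one_mul, hr, map_zpow]
  simp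

/-- For a finite group `N`, an automorphism of `N ⋊ ℤ` has finite Reidemeister number if and only
if it induces the inversion on `ℤ`. -/
theorem finite_twistedConj_iff [Finite N]
    (φ : N ⋊[α] Multiplicative ℤ ≃* N ⋊[α] Multiplicative ℤ) :
    Finite (Quotient (twistedConj φ.toMonoidHom)) ↔
      rightHom (φ (inr (Multiplicative.ofAdd 1))) = (Multiplicative.ofAdd (1 : ℤ))⁻¹ := by
  set e : ℤ := (rightHom (φ (inr (Multiplicative.ofAdd 1)))).toAdd with he
  have key (z : N ⋊[α] Multiplicative ℤ) : (φ z).right.toAdd = z.right.toAdd * e :=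
    toAdd_hom_apply (rightHom.comp φ.toMonoidHom) z
  have hright (z y : N ⋊[α] Multiplicative ℤ) :
      (z * y * (φ z)⁻¹).right.toAdd = z.right.toAdd + y.right.toAdd - z.right.toAdd * e := by
    simp [key, sub_eq_add_neg]
  have hiff : rightHom (φ (inr (Multiplicative.ofAdd 1))) = (Multiplicative.ofAdd (1 : ℤ))⁻¹ ↔
      e = -1 := by
    rw [he, ← ofAdd_neg, ← Multiplicative.toAdd.apply_eq_iff_eq, toAdd_ofAdd]
  rw [hiff]
  constructor
  · intro hfin
    obtain ⟨z, hz⟩ := φ.surjective (inr (Multiplicative.ofAdd 1))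
    have hunit : z.right.toAdd * e = 1 := by
      rw [← key, hz]
      simp
    refine (Int.isUnit_iff.1 (IsUnit.of_mul_eq_one_right _ hunit)).resolve_left fun h1 => ?_
    let q : Quotient (twistedConj φ.toMonoidHom) → ℤ :=
      Quotient.lift (fun x => x.right.toAdd) (by
        rintro x y ⟨z, rfl⟩
        simpa [h1] using hright z y)
    have hq : Function.Surjective q := fun k =>
      ⟨Quotient.mk _ (inr (Multiplicative.ofAdd k)), rfl⟩
    exact not_finite_iff_infinite.2 (inferInstanceAs (Infinite ℤ)) (Finite.of_surjective q hq)
  · intro h1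
    let s : N × Bool → Quotient (twistedConj φ.toMonoidHom) := fun p =>
      Quotient.mk _ ⟨p.1, Multiplicative.ofAdd (if p.2 then 1 else 0)⟩
    refine Finite.of_surjective s fun a => ?_
    obtain ⟨x, rfl⟩ := Quotient.exists_rep a
    set k : ℤ := x.right.toAdd with hk
    let z : N ⋊[α] Multiplicative ℤ := inr (Multiplicative.ofAdd (-(k / 2)))
    let y := z * x * (φ z)⁻¹
    have hy : y.right.toAdd = k % 2 := by
      simp only [y, hright, h1, z, right_inr, toAdd_ofAdd, ← hk]
      omega
    refine ⟨(y.left, decide (k % 2 = 1)), Quotient.sound ⟨z, ?_⟩⟩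
    change _ = y
    refine SemidirectProduct.ext rfl (Multiplicative.toAdd.injective ?_)
    rw [hy]
    rcases Int.emod_two_eq_zero_or_one k with h0 | h0 <;> simp [h0]

end SemidirectProduct

/-- For `gcd(m,n) = 1`, `m ≠ n`, `c ≥ 1` and any automorphism `φ` of `G_c(m,n)`:
the Reidemeister number `R(φ)` is finite iff the automorphism induced by `φ` on
`G_c(m,n)/A_c(m,n) = ⟨t⟩` sends `t` to `t⁻¹` (identifying the quotient with `⟨t⟩` via
`SemidirectProduct.rightHom`). -/
theorem stmt11 (m n : ℤ) (h : Int.gcd m n = 1) (hmn : m ≠ n) (c : ℕ) (hc : 1 ≤ c)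
    (φ : Gc c m n ≃* Gc c m n) :
    Finite (Quotient (twistedConj φ.toMonoidHom)) ↔
      SemidirectProduct.rightHom (φ (tGen c m n)) = (Multiplicative.ofAdd (1 : ℤ))⁻¹ := by
  have := finite_Ac c hmn
  exact SemidirectProduct.finite_twistedConj_iff φ
end

section
/- Let m, n be integers with 0 < m ≤ |n| and m ≠ n, let d = gcd(m,n) and let c ≥ 1. If G_c(m/d, n/d) has the R_∞–property, then G_c(m,n) has the R_∞–property. -/
/-- If the kernel of a surjection `π : G →* H` consists of the solutions of `g ^ d = 1`, it is
preserved by every automorphism of `G`, so the `R∞`–property lifts from `H` to `G`. -/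
theorem HasRInfty.of_surjective_of_ker {G H : Type*} [Group G] [Group H] (π : G →* H)
    (hπ : Function.Surjective π) (d : ℕ) (hker : ∀ g, π g = 1 ↔ g ^ d = 1)
    (hH : HasRInfty H) : HasRInfty G := by
  intro φ
  have hmap : π.ker.map (φ : G →* G) = π.ker := by
    ext x
    change x ∈ π.ker.map φ.toMonoidHom ↔ _
    rw [Subgroup.mem_map_equiv, MonoidHom.mem_ker, MonoidHom.mem_ker, hker, hker, ← map_pow,
      EmbeddingLike.map_eq_one_iff]
  let e := QuotientGroup.quotientKerEquivOfSurjective π hπ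
  let φ' : H ≃* H := (e.symm.trans (QuotientGroup.congr π.ker π.ker φ hmap)).trans e
  have hφ' : ∀ g, φ' (π g) = π (φ g) := by
    intro g
    have he : e.symm (π g) = (g : G ⧸ π.ker) := by
      rw [MulEquiv.symm_apply_eq]
      rfl
    simp only [φ', MulEquiv.trans_apply, he]
    rfl
  have := hH φ'
  refine Infinite.of_surjective (α := Quotient (twistedConj φ.toMonoidHom))
    (β := Quotient (twistedConj φ'.toMonoidHom)) (Quotient.map π ?_) ?_
  · rintro x y ⟨z, rfl⟩
    refine ⟨π z, ?_⟩
    change _ = π z * π y * (φ' (π z))⁻¹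
    rw [hφ']
    simp
  · rintro ⟨y⟩
    obtain ⟨x, rfl⟩ := hπ y
    exact ⟨⟦x⟧, rfl⟩

theorem MulAut.semiconj_zpow {M N : Type*} [Group M] [Group N] {f : M →* N} {a : MulAut M}
    {b : MulAut N} (h : ∀ x, f (a x) = b (f x)) (k : ℤ) (x : M) :
    f ((a ^ k) x) = (b ^ k) (f x) := by
  have hinv : ∀ x, f (a⁻¹ x) = b⁻¹ (f x) := fun x => by
    apply b.injective
    rw [← h, MulAut.apply_inv_self, MulAut.apply_inv_self]
  induction k generalizing x with
  | zero => simp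
  | succ n ih => rw [zpow_add_one, zpow_add_one, MulAut.mul_apply, MulAut.mul_apply, ih, h]
  | pred n ih => rw [zpow_sub_one, zpow_sub_one, MulAut.mul_apply, MulAut.mul_apply, ih, hinv]

theorem Mphi_mul (c : ℕ) (d m n : ℤ) : Mphi c (d * m) (d * n) = d • Mphi c m n := by
  simp only [Mphi, smul_add, smul_smul]
  congr 2 <;> ring

theorem smul_mem_phiRange_mul {c : ℕ} {d : ℤ} (hd : d ≠ 0) (m n : ℤ) (x : Fin c → ℤ) :
    d • x ∈ phiRange c (d * m) (d * n) ↔ x ∈ phiRange c m n := by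
  change (∃ y, (Mphi c (d * m) (d * n)).mulVec y = d • x) ↔ ∃ y, (Mphi c m n).mulVec y = x
  simp only [Mphi_mul, Matrix.smul_mulVec]
  exact exists_congr fun y => smul_right_inj hd

theorem phiRange_mul_le (c : ℕ) (d m n : ℤ) :
    phiRange c (d * m) (d * n) ≤ phiRange c m n := by
  rintro _ ⟨y, rfl⟩
  refine ⟨d • y, ?_⟩
  change (Mphi c m n).mulVec (d • y) = (Mphi c (d * m) (d * n)).mulVec y
  rw [Mphi_mul, Matrix.smul_mulVec, Matrix.mulVec_smul]

/-- The projection `A_c(dm, dn) → A_c(m, n)`. -/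
def projA (c : ℕ) (d m n : ℤ) : Ac c (d * m) (d * n) →+ Ac c m n :=
  QuotientAddGroup.map _ _ (AddMonoidHom.id _) (phiRange_mul_le c d m n)

theorem projA_psiA (c : ℕ) (d m n : ℤ) (a : Ac c (d * m) (d * n)) :
    projA c d m n (psiA c (d * m) (d * n) a) = psiA c m n (projA c d m n a) := by
  induction a using QuotientAddGroup.induction_on
  rfl

theorem projA_eq_zero_iff {c : ℕ} {d : ℤ} (hd : d ≠ 0) (m n : ℤ) (a : Ac c (d * m) (d * n)) :
    projA c d m n a = 0 ↔ d • a = 0 := by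
  induction a using QuotientAddGroup.induction_on with
  | H x =>
    change ((x : (Fin c → ℤ)) : Ac c m n) = 0 ↔
      ((d • x : (Fin c → ℤ)) : Ac c (d * m) (d * n)) = 0
    rw [QuotientAddGroup.eq_zero_iff, QuotientAddGroup.eq_zero_iff, smul_mem_phiRange_mul hd]

/-- The projection `G_c(dm, dn) → G_c(m, n)`. -/
noncomputable def projG (c : ℕ) (d m n : ℤ) : Gc c (d * m) (d * n) →* Gc c m n :=
  SemidirectProduct.map (AddMonoidHom.toMultiplicative (projA c d m n)) (MonoidHom.id _)
    fun k => MonoidHom.ext fun x => by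
      refine MulAut.semiconj_zpow (f := AddMonoidHom.toMultiplicative (projA c d m n))
        (fun x => ?_) k.toAdd x
      apply (AddEquiv.toMultiplicative (psiA c m n)).injective
      refine Eq.trans ?_ (MulAut.apply_inv_self _ (AddEquiv.toMultiplicative (psiA c m n)) _).symm
      refine (projA_psiA c d m n _).symm.trans ?_
      exact congrArg (projA c d m n) ((psiA c (d * m) (d * n)).apply_symm_apply _)

theorem projG_surjective (c : ℕ) (d m n : ℤ) : Function.Surjective (projG c d m n) := by
  rintro ⟨a, k⟩
  obtain ⟨x, rfl⟩ := QuotientAddGroup.mk_surjective a.toAdd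
  exact ⟨⟨Multiplicative.ofAdd (x : Ac c (d * m) (d * n)), k⟩, rfl⟩

theorem projG_eq_one_iff {c d : ℕ} (hd : d ≠ 0) (m n : ℤ) (g : Gc c (d * m) (d * n)) :
    projG c d m n g = 1 ↔ g ^ d = 1 := by
  have hinl : ∀ a : Ac c (d * m) (d * n),
      projG c d m n (SemidirectProduct.inl (Multiplicative.ofAdd a)) = 1 ↔
        (SemidirectProduct.inl (Multiplicative.ofAdd a) : Gc c (d * m) (d * n)) ^ d = 1 := by
    intro a
    rw [← map_pow, projG, SemidirectProduct.map_inl,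
      map_eq_one_iff _ SemidirectProduct.inl_injective,
      map_eq_one_iff _ SemidirectProduct.inl_injective]
    refine (projA_eq_zero_iff (by exact_mod_cast hd) m n a).trans ?_
    rw [natCast_zsmul]
    rfl
  have hg : g.right = 1 → (projG c d m n g = 1 ↔ g ^ d = 1) := by
    intro hr
    have : g = SemidirectProduct.inl (Multiplicative.ofAdd g.left.toAdd) :=
      SemidirectProduct.ext rfl hr
    rw [this]
    exact hinl _
  constructor <;> intro h
  · exact (hg (congrArg SemidirectProduct.right h)).1 h
  · refine (hg ?_).2 h
    have hr : g.right ^ d = 1 := by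
      rw [← SemidirectProduct.rightHom_eq_right, ← map_pow, h, map_one]
    have : d • g.right.toAdd = 0 := hr
    exact (smul_eq_zero.1 this).resolve_left hd

theorem HasRInfty.Gc_mul {c d : ℕ} (hd : d ≠ 0) {m n : ℤ} (h : HasRInfty (Gc c m n)) :
    HasRInfty (Gc c (d * m) (d * n)) :=
  h.of_surjective_of_ker (projG c d m n) (projG_surjective c d m n) d (projG_eq_one_iff hd m n)

/-- For `0 < m ≤ |n|`, `m ≠ n`, `d = gcd(m,n)` and `c ≥ 1`: if `G_c(m/d, n/d)` has the
`R∞`–property, then so does `G_c(m,n)`. -/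
theorem stmt18 (m n : ℤ) (hm : 0 < m) (hmabs : m ≤ |n|) (hmn : m ≠ n) (c : ℕ)
    (hc : 1 ≤ c)
    (h : HasRInfty (Gc c (m / (Int.gcd m n : ℤ)) (n / (Int.gcd m n : ℤ)))) :
    HasRInfty (Gc c m n) := by
  have hd : Int.gcd m n ≠ 0 := fun h0 => hm.ne' (Int.gcd_eq_zero_iff.1 h0).1
  have hG := h.Gc_mul hd
  rwa [Int.mul_ediv_cancel' (Int.gcd_dvd_left m n), Int.mul_ediv_cancel' (Int.gcd_dvd_right m n)] at hG
end
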